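/- Lattice transgression formula (case k = 1 of the descent equations): Let A_0 and A_1 be lattice 1-forms on ℤ^D, set F_0 = dA_0, F_1 = dA_1 and η^{1,0} = A_1 − A_0, and let r ≥ 1. Then in the noncommutative wedge algebra of lattice forms, F_1^{r} − F_0^{r} = d( Σ_{m=0}^{r−1} F_0^{m} ∧ η^{1,0} ∧ F_1^{r−1−m} ), where powers denote iterated noncommutative wedge products. -/

import Mathlib

open scoped BigOperators

/-- A site of the hypercubic lattice `ℤ^D`. -/
abbrev Site (D : ℕ) := Fin D → ℤ

/-- The coefficient function of a lattice form on `ℤ^D`: to each site it assigns a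
real coefficient depending on a sequence of direction indices (a `k`-form only
uses the first `k` indices). -/
abbrev Coeff (D : ℕ) := Site D → (ℕ → Fin D) → ℝ

/-- Shift a site by the `μ`-th standard basis vector `ê_μ`. -/
def shiftSite {D : ℕ} (n : Site D) (μ : Fin D) : Site D :=
  fun ν => n ν + if ν = μ then 1 else 0

/-- Forward difference operator `(Δ_μ f)(n) = f(n + ê_μ) - f(n)`. -/
def fdiff {D : ℕ} (μ : Fin D) (f : Site D → ℝ) (n : Site D) : ℝ :=
  f (shiftSite n μ) - f n

/-- Shift a site by `ê_{μ 0} + ê_{μ 1} + ⋯ + ê_{μ (k-1)}`. -/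
def multiShift {D : ℕ} (k : ℕ) (n : Site D) (μ : ℕ → Fin D) : Site D :=
  fun ν => n ν + ∑ i ∈ Finset.range k, (if ν = μ i then 1 else 0)

/-- Antisymmetrization of a coefficient function over its first `k` indices. -/
noncomputable def alt {D : ℕ} (k : ℕ) (c : Coeff D) : Coeff D :=
  fun n μ => ((k.factorial : ℝ))⁻¹ *
    ∑ σ : Equiv.Perm (Fin k), ((Equiv.Perm.sign σ : ℤ) : ℝ) *
      c n (fun i => if h : i < k then μ ↑(σ ⟨i, h⟩) else μ i)

/-- The lattice exterior derivative of a `k`-form: the antisymmetrization over all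
`k+1` indices of `Δ_μ ω_{μ₁⋯μ_k}(n)`. -/
noncomputable def extd {D : ℕ} (k : ℕ) (ω : Coeff D) : Coeff D :=
  alt (k+1) (fun n μ => fdiff (μ 0) (fun x => ω x (fun i => μ (i+1))) n)

/-- The noncommutative wedge product of a `k`-form and an `l`-form on the lattice:
the antisymmetrization over all `k+l` indices of
`ω_{μ₁⋯μ_k}(n) · θ_{ν₁⋯ν_l}(n + ê_{μ₁} + ⋯ + ê_{μ_k})`. -/
noncomputable def wedge {D : ℕ} (k l : ℕ) (ω θ : Coeff D) : Coeff D :=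
  alt (k+l) (fun n μ => ω n μ * θ (multiShift k n μ) (fun i => μ (i+k)))

/-- Iterated noncommutative wedge power of a 2-form (the empty product is the
constant `1`, a 0-form). -/
noncomputable def wpow {D : ℕ} (F : Coeff D) : ℕ → Coeff D
  | 0 => fun _ _ => 1
  | m+1 => wedge 2 (2*m) F (wpow F m)

/-- Noncommutative wedge product of a list of (degree, form) pairs. -/
noncomputable def wedgeList {D : ℕ} : List (ℕ × Coeff D) → Coeff D
  | [] => fun _ _ => 1
  | (d, ω) :: rest => wedge d ((rest.map Prod.fst).sum) ω (wedgeList rest)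

/-- `ω` is a genuine lattice `k`-form: its coefficient depends only on the first
`k` indices and is totally antisymmetric in them. -/
def IsLatticeForm (D k : ℕ) (ω : Coeff D) : Prop :=
  (∀ (n : Site D) (μ ν : ℕ → Fin D), (∀ i < k, μ i = ν i) → ω n μ = ω n ν) ∧
  (∀ (n : Site D) (μ : ℕ → Fin D) (σ : Equiv.Perm (Fin k)),
    ω n (fun i => if h : i < k then μ ↑(σ ⟨i, h⟩) else μ i)
      = ((Equiv.Perm.sign σ : ℤ) : ℝ) * ω n μ)

/-- Extend a tuple `m : Fin j → ℕ` to `ℕ → ℕ` by zero. -/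
def mext {j : ℕ} (m : Fin j → ℕ) : ℕ → ℕ :=
  fun i => if h : i < j then m ⟨i, h⟩ else 0

/-- The curvature 2-form `F = dA` of a lattice 1-form `A`. -/
noncomputable def curv {D : ℕ} (A : Coeff D) : Coeff D := extd 1 A

/-- The standard descent product
`F_0^{m_0} ∧ η^{1,0} ∧ F_1^{m_1} ∧ η^{2,1} ∧ ⋯ ∧ η^{k,k-1} ∧ F_k^{m_k}`,
with `F_i = dA_i` and `η^{i,i-1} = A_i - A_{i-1}`, as a list of (degree, form) pairs. -/
noncomputable def descentList {D : ℕ} (k : ℕ) (A : ℕ → Coeff D) (m : ℕ → ℕ) : List (ℕ × Coeff D) :=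
  (2 * m 0, wpow (curv (A 0)) (m 0)) ::
    (List.range k).flatMap (fun i =>
      [(1, A (i+1) - A i), (2 * m (i+1), wpow (curv (A (i+1))) (m (i+1)))])

/-- The Chern–Simons type characteristic class `Q_r^{(k)}(A_0,…,A_k)` on the lattice:
the sum over compositions `m_0 + ⋯ + m_k = r - k` of the descent products. -/
noncomputable def Qpoly {D : ℕ} (r k : ℕ) (A : ℕ → Coeff D) : Coeff D :=
  ∑ m ∈ Finset.Nat.antidiagonalTuple (k+1) (r - k), wedgeList (descentList k A (mext m))

/-!
On the lattice, `d` is a graded commutator: with the constant `1`-form `e = ∑_μ dx^μ`, every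
`k`-form satisfies `dω = e ∧ ω - (-1)^k ω ∧ e`. Since the noncommutative wedge product is
associative and `e ∧ e = 0`, the graded Leibniz rule and `d² = 0` follow formally. Hence `F₀^m` and
`F₁^q` are closed, so
`d (F₀^m ∧ η ∧ F₁^q) = F₀^m ∧ (F₁ - F₀) ∧ F₁^q = F₀^m ∧ F₁^(q+1) - F₀^(m+1) ∧ F₁^q`,
and the sum over `m + q = r - 1` telescopes.
-/

open Equiv (Perm)

namespace LatticeForm

variable {D : ℕ}

/-! ### Index permutations and antisymmetrization -/

/-- The action of a permutation of the first `k` slots on a sequence of direction indices. -/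
def permIndices {k : ℕ} (σ : Perm (Fin k)) (μ : ℕ → Fin D) : ℕ → Fin D :=
  fun i => if h : i < k then μ (σ ⟨i, h⟩) else μ i

/-- The action of a permutation of the first `k` slots on coefficient functions. -/
def permute {k : ℕ} (σ : Perm (Fin k)) (c : Coeff D) : Coeff D :=
  fun n μ => c n (permIndices σ μ)

/-- The locality half of `IsLatticeForm`: the coefficient reads only its first `k` indices. -/
def DependsOnFirst (k : ℕ) (c : Coeff D) : Prop :=
  ∀ n, DependsOn (c n) (Set.Iio k)

theorem _root_.IsLatticeForm.dependsOnFirst {k : ℕ} {ω : Coeff D} (hω : IsLatticeForm D k ω) :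
    DependsOnFirst k ω :=
  fun n μ ν h => hω.1 n μ ν h

theorem DependsOnFirst.sub {k : ℕ} {a b : Coeff D} (ha : DependsOnFirst k a)
    (hb : DependsOnFirst k b) : DependsOnFirst k (a - b) :=
  fun n _ _ h => congrArg₂ (· - ·) (ha n h) (hb n h)

@[simp]
theorem permIndices_one (k : ℕ) (μ : ℕ → Fin D) : permIndices (1 : Perm (Fin k)) μ = μ := by
  funext i
  simp [permIndices]

@[simp]
theorem permute_one (k : ℕ) (c : Coeff D) : permute (1 : Perm (Fin k)) c = c := by
  funext n μ
  simp [permute]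

theorem permIndices_permIndices {k : ℕ} (σ τ : Perm (Fin k)) (μ : ℕ → Fin D) :
    permIndices τ (permIndices σ μ) = permIndices (σ * τ) μ := by
  funext i
  by_cases h : i < k <;> simp [permIndices, h]

theorem permute_permute {k : ℕ} (σ τ : Perm (Fin k)) (c : Coeff D) :
    permute σ (permute τ c) = permute (σ * τ) c := by
  funext n μ
  exact congrArg (c n) (permIndices_permIndices σ τ μ)

theorem alt_eq_sum_permute (k : ℕ) (c : Coeff D) :
    alt k c = (k.factorial : ℝ)⁻¹ •
      ∑ σ : Perm (Fin k), ((Perm.sign σ : ℤ) : ℝ) • permute σ c := by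
  funext n μ
  simp only [alt, permute, Pi.smul_apply, Finset.sum_apply, smul_eq_mul]
  rfl

/-- Antisymmetrization as a linear map. -/
noncomputable def altₗ (k : ℕ) : Coeff D →ₗ[ℝ] Coeff D where
  toFun := alt k
  map_add' a b := by
    funext n μ
    simp [alt, mul_add, Finset.sum_add_distrib]
  map_smul' t a := by
    funext n μ
    simp [alt, mul_left_comm _ t, Finset.mul_sum]

@[simp]
theorem altₗ_apply (k : ℕ) (c : Coeff D) : altₗ k c = alt k c :=
  rfl

theorem sign_mul_self {k : ℕ} (σ : Perm (Fin k)) :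
    ((Perm.sign σ : ℤ) : ℝ) * ((Perm.sign σ : ℤ) : ℝ) = 1 := by
  rw [← Int.cast_mul, ← Units.val_mul, Int.units_mul_self, Units.val_one, Int.cast_one]

theorem alt_permute {k : ℕ} (τ : Perm (Fin k)) (c : Coeff D) :
    alt k (permute τ c) = ((Perm.sign τ : ℤ) : ℝ) • alt k c := by
  have sign_mul_right (σ : Perm (Fin k)) : ((Perm.sign σ : ℤ) : ℝ) =
      ((Perm.sign τ : ℤ) : ℝ) * ((Perm.sign (σ * τ) : ℤ) : ℝ) := by
    rw [Perm.sign_mul, Units.val_mul, Int.cast_mul, mul_left_comm, sign_mul_self, mul_one]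
  simp only [alt_eq_sum_permute, permute_permute]
  rw [smul_comm ((Perm.sign τ : ℤ) : ℝ)]
  congr 1
  rw [Finset.smul_sum, ← Equiv.sum_comp (Equiv.mulRight τ) fun σ =>
    ((Perm.sign τ : ℤ) : ℝ) • ((Perm.sign σ : ℤ) : ℝ) • permute σ c]
  simp only [Equiv.coe_mulRight, smul_smul, ← sign_mul_right]

theorem map_alt_of_map_permute {M : Type*} [AddCommMonoid M] [Module ℝ M] {k : ℕ}
    (f : Coeff D →ₗ[ℝ] M) {c : Coeff D}
    (hf : ∀ σ : Perm (Fin k), f (permute σ c) = ((Perm.sign σ : ℤ) : ℝ) • f c) :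
    f (alt k c) = f c := by
  simp [alt_eq_sum_permute, hf, smul_smul, sign_mul_self, Fintype.card_perm,
    ← Nat.cast_smul_eq_nsmul ℝ, Nat.factorial_ne_zero]

theorem alt_alt (k : ℕ) (c : Coeff D) : alt k (alt k c) = alt k c :=
  map_alt_of_map_permute (altₗ k) fun σ => alt_permute σ c

theorem DependsOnFirst.alt {k : ℕ} {c : Coeff D} (hc : DependsOnFirst k c) :
    DependsOnFirst k (alt k c) := by
  intro n μ ν hμν
  simp only [_root_.alt]
  congr! 3 with σ
  refine hc n fun i (hi : i < k) => ?_
  simpa [hi] using hμν _ (σ ⟨i, hi⟩).isLt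

/-! ### The tensor product and the wedge product -/

theorem multiShift_dependsOn (k : ℕ) (n : Site D) : DependsOn (multiShift k n) (Set.Iio k) := by
  intro μ ν h
  funext x
  simp only [multiShift]
  congr 1
  exact Finset.sum_congr rfl fun i hi => by rw [h i (Finset.mem_range.mp hi)]

theorem multiShift_permIndices {k : ℕ} (σ : Perm (Fin k)) (n : Site D) (μ : ℕ → Fin D) :
    multiShift k n (permIndices σ μ) = multiShift k n μ := by
  funext x
  simp only [multiShift, Finset.sum_range, permIndices, Fin.is_lt, dite_true, Fin.eta]
  rw [Equiv.sum_comp σ fun i : Fin k => if x = μ i then (1 : ℤ) else 0]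

theorem multiShift_zero (n : Site D) (μ : ℕ → Fin D) : multiShift 0 n μ = n := by
  funext x
  simp [multiShift]

theorem multiShift_one (n : Site D) (μ : ℕ → Fin D) : multiShift 1 n μ = shiftSite n (μ 0) := by
  funext x
  simp only [multiShift, shiftSite, Finset.sum_range_one]

theorem multiShift_add (k l : ℕ) (n : Site D) (μ : ℕ → Fin D) :
    multiShift (k + l) n μ = multiShift l (multiShift k n μ) fun i => μ (i + k) := by
  funext x
  simp only [multiShift, Finset.sum_range_add, add_assoc, add_comm _ k]

/-- The noncommutative tensor product of a `k`-form with another form: the wedge product before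
antisymmetrization. -/
def tensor (k : ℕ) : Coeff D →ₗ[ℝ] Coeff D →ₗ[ℝ] Coeff D :=
  LinearMap.mk₂ ℝ (fun a b n μ => a n μ * b (multiShift k n μ) fun i => μ (i + k))
    (fun _ _ _ => by funext n μ; simp [add_mul])
    (fun _ _ _ => by funext n μ; simp [mul_assoc])
    (fun _ _ _ => by funext n μ; simp [mul_add])
    (fun _ _ _ => by funext n μ; simp [mul_left_comm])

theorem tensor_apply (k : ℕ) (a b : Coeff D) (n : Site D) (μ : ℕ → Fin D) :
    tensor k a b n μ = a n μ * b (multiShift k n μ) fun i => μ (i + k) :=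
  rfl

theorem wedge_eq_alt_tensor (k l : ℕ) (a b : Coeff D) :
    wedge k l a b = alt (k + l) (tensor k a b) :=
  rfl

theorem tensor_tensor (k l : ℕ) (a b c : Coeff D) :
    tensor (k + l) (tensor k a b) c = tensor k a (tensor l b c) := by
  funext n μ
  simp only [tensor_apply, multiShift_add, mul_assoc, ← add_assoc, add_right_comm _ k l]

theorem DependsOnFirst.tensor {k l : ℕ} {a b : Coeff D} (ha : DependsOnFirst k a)
    (hb : DependsOnFirst l b) : DependsOnFirst (k + l) (tensor k a b) := by
  intro n μ ν h
  have h_left : ∀ i ∈ Set.Iio k, μ i = ν i := fun i hi => h i (Nat.lt_add_right l hi)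
  have h_right : ∀ i ∈ Set.Iio l, μ (i + k) = ν (i + k) := fun i hi =>
    h (i + k) (by rw [Set.mem_Iio] at hi ⊢; omega)
  rw [tensor_apply, tensor_apply, ha n h_left, multiShift_dependsOn k n h_left, hb _ h_right]

/-- The permutation of `k + l` slots acting by `σ` on the first `k` and by `τ` on the last `l`. -/
def blockPerm {k l : ℕ} (σ : Perm (Fin k)) (τ : Perm (Fin l)) : Perm (Fin (k + l)) :=
  finSumFinEquiv.permCongr (σ.sumCongr τ)

theorem sign_blockPerm {k l : ℕ} (σ : Perm (Fin k)) (τ : Perm (Fin l)) :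
    Perm.sign (blockPerm σ τ) = Perm.sign σ * Perm.sign τ := by
  simp [blockPerm]

theorem blockPerm_castAdd {k l : ℕ} (σ : Perm (Fin k)) (τ : Perm (Fin l)) (i : Fin k) :
    blockPerm σ τ (Fin.castAdd l i) = Fin.castAdd l (σ i) := by
  simp [blockPerm, Equiv.permCongr_apply]

theorem blockPerm_natAdd {k l : ℕ} (σ : Perm (Fin k)) (τ : Perm (Fin l)) (i : Fin l) :
    blockPerm σ τ (Fin.natAdd k i) = Fin.natAdd k (τ i) := by
  simp [blockPerm, Equiv.permCongr_apply]

theorem permIndices_blockPerm_of_lt {k l : ℕ} (σ : Perm (Fin k)) (τ : Perm (Fin l))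
    (μ : ℕ → Fin D) {i : ℕ} (hi : i < k) :
    permIndices (blockPerm σ τ) μ i = permIndices σ μ i := by
  have h_cast : (⟨i, Nat.lt_add_right l hi⟩ : Fin (k + l)) = Fin.castAdd l ⟨i, hi⟩ := rfl
  simp only [permIndices, hi, Nat.lt_add_right l hi, dite_true, h_cast, blockPerm_castAdd,
    Fin.val_castAdd]

theorem permIndices_blockPerm_add {k l : ℕ} (σ : Perm (Fin k)) (τ : Perm (Fin l))
    (μ : ℕ → Fin D) (i : ℕ) :
    permIndices (blockPerm σ τ) μ (i + k) = permIndices τ (fun j => μ (j + k)) i := by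
  by_cases hi : i < l
  · have hik : i + k < k + l := by omega
    have h_cast : (⟨i + k, hik⟩ : Fin (k + l)) = Fin.natAdd k ⟨i, hi⟩ :=
      Fin.ext (Nat.add_comm i k)
    simp only [permIndices, hi, hik, dite_true, h_cast, blockPerm_natAdd, Fin.val_natAdd]
    rw [add_comm]
  · have hik : ¬ i + k < k + l := by omega
    simp [permIndices, hi, hik]

theorem permute_blockPerm_tensor {k l : ℕ} (σ : Perm (Fin k)) (τ : Perm (Fin l)) {a : Coeff D}
    (ha : DependsOnFirst k a) (b : Coeff D) :
    permute (blockPerm σ τ) (tensor k a b) = tensor k (permute σ a) (permute τ b) := by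
  funext n μ
  have h_left : ∀ i ∈ Set.Iio k, permIndices (blockPerm σ τ) μ i = permIndices σ μ i :=
    fun _ hi => permIndices_blockPerm_of_lt σ τ μ hi
  simp only [permute, tensor_apply, permIndices_blockPerm_add]
  rw [ha n h_left, multiShift_dependsOn k n h_left, multiShift_permIndices]

theorem alt_tensor_permute {k l : ℕ} (σ : Perm (Fin k)) (τ : Perm (Fin l)) {a : Coeff D}
    (ha : DependsOnFirst k a) (b : Coeff D) :
    alt (k + l) (tensor k (permute σ a) (permute τ b)) =
      (((Perm.sign σ * Perm.sign τ : ℤˣ) : ℤ) : ℝ) • alt (k + l) (tensor k a b) := by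
  rw [← permute_blockPerm_tensor σ τ ha, alt_permute, sign_blockPerm]

theorem alt_tensor_alt_left {k : ℕ} (l : ℕ) {a : Coeff D} (ha : DependsOnFirst k a)
    (b : Coeff D) : alt (k + l) (tensor k (alt k a) b) = alt (k + l) (tensor k a b) :=
  map_alt_of_map_permute (altₗ (k + l) ∘ₗ (tensor k).flip b) fun σ => by
    simpa using alt_tensor_permute σ (1 : Perm (Fin l)) ha b

theorem alt_tensor_alt_right {k : ℕ} (l : ℕ) {a : Coeff D} (ha : DependsOnFirst k a)
    (b : Coeff D) : alt (k + l) (tensor k a (alt l b)) = alt (k + l) (tensor k a b) :=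
  map_alt_of_map_permute (altₗ (k + l) ∘ₗ tensor k a) fun τ => by
    simpa using alt_tensor_permute (1 : Perm (Fin k)) τ ha b

theorem wedge_assoc {k l m kl lm : ℕ} {a b : Coeff D} (ha : DependsOnFirst k a)
    (hb : DependsOnFirst l b) (c : Coeff D) (hkl : k + l = kl) (hlm : l + m = lm) :
    wedge kl m (wedge k l a b) c = wedge k lm a (wedge l m b c) := by
  subst hkl hlm
  simp only [wedge_eq_alt_tensor]
  rw [alt_tensor_alt_left m (ha.tensor hb), tensor_tensor, add_assoc, alt_tensor_alt_right _ ha]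

theorem DependsOnFirst.wedge {k l : ℕ} {a b : Coeff D} (ha : DependsOnFirst k a)
    (hb : DependsOnFirst l b) : DependsOnFirst (k + l) (wedge k l a b) :=
  (ha.tensor hb).alt

/-- The wedge product as a bilinear map. -/
noncomputable def wedgeₗ (k l : ℕ) : Coeff D →ₗ[ℝ] Coeff D →ₗ[ℝ] Coeff D :=
  (tensor k).compr₂ (altₗ (k + l))

theorem wedge_sub_left (k l : ℕ) (a a' b : Coeff D) :
    wedge k l (a - a') b = wedge k l a b - wedge k l a' b :=
  (wedgeₗ k l).map_sub₂ a a' b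

theorem wedge_sub_right (k l : ℕ) (a b b' : Coeff D) :
    wedge k l a (b - b') = wedge k l a b - wedge k l a b' :=
  map_sub (wedgeₗ k l a) b b'

theorem wedge_smul_left (k l : ℕ) (t : ℝ) (a b : Coeff D) :
    wedge k l (t • a) b = t • wedge k l a b :=
  (wedgeₗ k l).map_smul₂ t a b

theorem wedge_smul_right (k l : ℕ) (t : ℝ) (a b : Coeff D) :
    wedge k l a (t • b) = t • wedge k l a b :=
  map_smul (wedgeₗ k l a) t b

@[simp]
theorem wedge_zero_left (k l : ℕ) (b : Coeff D) : wedge k l 0 b = 0 :=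
  (wedgeₗ k l).map_zero₂ b

@[simp]
theorem wedge_zero_right (k l : ℕ) (a : Coeff D) : wedge k l a 0 = 0 :=
  map_zero (wedgeₗ k l a)

theorem one_wedge (l : ℕ) (b : Coeff D) : wedge 0 l 1 b = alt l b := by
  rw [wedge_eq_alt_tensor, zero_add]
  congr 1
  funext n μ
  simp [tensor_apply, multiShift_zero]

theorem wedge_one (k : ℕ) (a : Coeff D) : wedge k 0 a 1 = alt k a := by
  rw [wedge_eq_alt_tensor, add_zero]
  congr 1
  funext n μ
  simp [tensor_apply]

theorem wedgeList_triple (k l m : ℕ) (a b c : Coeff D) :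
    wedgeList [(k, a), (l, b), (m, c)] = wedge k (l + m) a (wedge l m b (alt m c)) := by
  rw [← wedge_one]
  rfl

/-! ### The exterior derivative as a graded commutator -/

/-- The constant `1`-form `∑_μ dx^μ`, all of whose coefficients are `1`. -/
def sumDx : Coeff D := 1

theorem dependsOnFirst_one (k : ℕ) : DependsOnFirst k (1 : Coeff D) :=
  fun _ _ _ _ => rfl

theorem dependsOnFirst_sumDx : DependsOnFirst 1 (sumDx : Coeff D) :=
  dependsOnFirst_one 1

theorem tensor_sumDx (k : ℕ) (ω : Coeff D) : tensor k ω sumDx = ω := by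
  funext n μ
  simp [tensor_apply, sumDx]

/-- The difference `Δ_{μ₀} ω_{μ₁⋯μ_k}`: the exterior derivative before antisymmetrization. -/
def leadingDiff : Coeff D →ₗ[ℝ] Coeff D where
  toFun ω n μ := fdiff (μ 0) (fun x => ω x fun i => μ (i + 1)) n
  map_add' a b := by
    funext n μ
    simp only [fdiff, Pi.add_apply]
    ring
  map_smul' t a := by
    funext n μ
    simp [fdiff, mul_sub]

theorem extd_eq_alt_leadingDiff (k : ℕ) (ω : Coeff D) :
    extd k ω = alt (k + 1) (leadingDiff ω) :=
  rfl

theorem permute_finRotate {k : ℕ} {ω : Coeff D} (hω : DependsOnFirst k ω) (n : Site D)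
    (μ : ℕ → Fin D) : permute (finRotate (k + 1)) ω n μ = ω n fun i => μ (i + 1) := by
  refine hω n fun i (hi : i < k) => ?_
  simp [permIndices, Nat.lt_succ_of_lt hi, finRotate_of_lt hi]

theorem leadingDiff_eq_sub {k : ℕ} {ω : Coeff D} (hω : DependsOnFirst k ω) :
    leadingDiff ω = tensor 1 sumDx ω - permute (finRotate (k + 1)) ω := by
  funext n μ
  simp [permute_finRotate hω, leadingDiff, fdiff, tensor_apply, sumDx, multiShift_one]

theorem alt_permute_finRotate (k : ℕ) (ω : Coeff D) :
    alt (k + 1) (permute (finRotate (k + 1)) ω) = (-1 : ℝ) ^ k • alt (k + 1) ω := by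
  simp [alt_permute, sign_finRotate]

theorem extd_eq_wedge_sumDx_sub {k : ℕ} {ω : Coeff D} (hω : DependsOnFirst k ω) :
    extd k ω = wedge 1 k sumDx ω - (-1 : ℝ) ^ k • wedge k 1 ω sumDx := by
  rw [wedge_eq_alt_tensor k, tensor_sumDx, ← alt_permute_finRotate, wedge_eq_alt_tensor,
    add_comm 1 k, extd_eq_alt_leadingDiff, leadingDiff_eq_sub hω]
  exact map_sub (altₗ (k + 1)) _ _

theorem sumDx_wedge_sumDx : wedge 1 1 (sumDx : Coeff D) sumDx = 0 := by
  have h_neg : alt 2 (sumDx : Coeff D) = -alt 2 sumDx :=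
    (alt_permute_finRotate 1 sumDx).trans (by simp)
  rw [wedge_eq_alt_tensor, tensor_sumDx]
  exact self_eq_neg.mp h_neg

theorem DependsOnFirst.extd {k : ℕ} {ω : Coeff D} (hω : DependsOnFirst k ω) :
    DependsOnFirst (k + 1) (extd k ω) := by
  refine DependsOnFirst.alt fun n μ ν h => ?_
  have h_head : μ 0 = ν 0 := h 0 k.succ_pos
  have h_tail : ∀ i ∈ Set.Iio k, μ (i + 1) = ν (i + 1) :=
    fun i hi => h (i + 1) (Nat.succ_lt_succ hi)
  simp only [fdiff, h_head, hω _ h_tail]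

/-- The exterior derivative as a linear map. -/
noncomputable def extdₗ (k : ℕ) : Coeff D →ₗ[ℝ] Coeff D :=
  altₗ (k + 1) ∘ₗ leadingDiff

theorem extd_sub (k : ℕ) (a b : Coeff D) : extd k (a - b) = extd k a - extd k b :=
  map_sub (extdₗ k) a b

theorem extd_sum {ι : Type*} (k : ℕ) (s : Finset ι) (f : ι → Coeff D) :
    extd k (∑ i ∈ s, f i) = ∑ i ∈ s, extd k (f i) :=
  map_sum (extdₗ k) f s

theorem extd_one : extd 0 (1 : Coeff D) = 0 := by
  funext n μ
  simp [extd, alt, fdiff]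

theorem extd_wedge {k l p : ℕ} {ω θ : Coeff D} (hω : DependsOnFirst k ω)
    (hθ : DependsOnFirst l θ) (hp : k + l = p) :
    extd p (wedge k l ω θ) =
      wedge (k + 1) l (extd k ω) θ + (-1 : ℝ) ^ k • wedge k (l + 1) ω (extd l θ) := by
  subst hp
  rw [extd_eq_wedge_sumDx_sub (hω.wedge hθ), extd_eq_wedge_sumDx_sub hω,
    extd_eq_wedge_sumDx_sub hθ, wedge_sub_left, wedge_smul_left, wedge_sub_right,
    wedge_smul_right, wedge_assoc hω hθ sumDx rfl rfl,
    wedge_assoc dependsOnFirst_sumDx hω θ (add_comm 1 k) rfl,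
    wedge_assoc hω dependsOnFirst_sumDx θ rfl (add_comm 1 l), pow_add]
  module

theorem extd_extd {k : ℕ} {ω : Coeff D} (hω : DependsOnFirst k ω) :
    extd (k + 1) (extd k ω) = 0 := by
  have h_left : wedge 1 (k + 1) sumDx (wedge 1 k sumDx ω) = 0 := by
    rw [← wedge_assoc dependsOnFirst_sumDx dependsOnFirst_sumDx ω rfl (add_comm 1 k),
      sumDx_wedge_sumDx, wedge_zero_left]
  have h_right : wedge (k + 1) 1 (wedge k 1 ω sumDx) sumDx = 0 := by
    rw [wedge_assoc hω dependsOnFirst_sumDx sumDx rfl rfl, sumDx_wedge_sumDx, wedge_zero_right]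
  have h_mid : wedge (k + 1) 1 (wedge 1 k sumDx ω) sumDx =
      wedge 1 (k + 1) sumDx (wedge k 1 ω sumDx) :=
    wedge_assoc dependsOnFirst_sumDx hω sumDx (add_comm 1 k) rfl
  rw [extd_eq_wedge_sumDx_sub hω.extd, extd_eq_wedge_sumDx_sub hω, wedge_sub_right,
    wedge_smul_right, wedge_sub_left, wedge_smul_left, h_left, h_right, h_mid, pow_succ]
  module

/-! ### Powers of `2`-forms and transgression -/

theorem wpow_succ (F : Coeff D) (m : ℕ) :
    wpow F (m + 1) = wedge 2 (2 * m) F (wpow F m) :=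
  rfl

theorem DependsOnFirst.wpow {F : Coeff D} (hF : DependsOnFirst 2 F) (m : ℕ) :
    DependsOnFirst (2 * m) (wpow F m) := by
  induction m with
  | zero => exact dependsOnFirst_one 0
  | succ m ih =>
    rw [wpow_succ, show 2 * (m + 1) = 2 + 2 * m by ring]
    exact hF.wedge ih

theorem alt_wpow (F : Coeff D) (m : ℕ) : alt (2 * m) (wpow F m) = wpow F m := by
  cases m with
  | zero =>
    funext n μ
    simp [alt, wpow]
  | succ m => rw [wpow_succ, wedge_eq_alt_tensor, show 2 * (m + 1) = 2 + 2 * m by ring, alt_alt]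

theorem wpow_succ' {F : Coeff D} (hF : DependsOnFirst 2 F) (m : ℕ) :
    wpow F (m + 1) = wedge (2 * m) 2 (wpow F m) F := by
  induction m with
  | zero => exact (wedge_one 2 F).trans (one_wedge 2 F).symm
  | succ m ih =>
    calc wpow F (m + 1 + 1) = wedge 2 (2 * (m + 1)) F (wedge (2 * m) 2 (wpow F m) F) := by
          rw [wpow_succ, ih]
      _ = wedge (2 * (m + 1)) 2 (wedge 2 (2 * m) F (wpow F m)) F :=
          (wedge_assoc hF (hF.wpow m) F (by ring) (by ring)).symm

theorem extd_wpow {F : Coeff D} (hF : DependsOnFirst 2 F) (hdF : extd 2 F = 0) (m : ℕ) :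
    extd (2 * m) (wpow F m) = 0 := by
  induction m with
  | zero => exact extd_one
  | succ m ih => simp [wpow_succ, extd_wedge hF (hF.wpow m) (p := 2 * (m + 1)) (by ring), hdF, ih]

theorem extd_wedge_wedge_of_closed {k l m p : ℕ} {P η Q : Coeff D} (hP : DependsOnFirst k P)
    (hη : DependsOnFirst l η) (hQ : DependsOnFirst m Q) (hdP : extd k P = 0)
    (hdQ : extd m Q = 0) (hp : k + (l + m) = p) :
    extd p (wedge k (l + m) P (wedge l m η Q)) =
      (-1 : ℝ) ^ k • wedge k (l + m + 1) P (wedge (l + 1) m (extd l η) Q) := by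
  simp [extd_wedge hP (hη.wedge hQ) hp, extd_wedge hη hQ rfl, hdP, hdQ]

theorem extd_wpow_wedge_wedge_wpow {F₀ F₁ η : Coeff D} (hF₀ : DependsOnFirst 2 F₀)
    (hF₁ : DependsOnFirst 2 F₁) (hη : DependsOnFirst 1 η) (hdF₀ : extd 2 F₀ = 0)
    (hdF₁ : extd 2 F₁ = 0) (hdη : extd 1 η = F₁ - F₀) (m q : ℕ) :
    extd (2 * (m + q) + 1)
        (wedge (2 * m) (1 + 2 * q) (wpow F₀ m) (wedge 1 (2 * q) η (wpow F₁ q))) =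
      wedge (2 * m) (2 * (q + 1)) (wpow F₀ m) (wpow F₁ (q + 1)) -
        wedge (2 * (m + 1)) (2 * q) (wpow F₀ (m + 1)) (wpow F₁ q) := by
  have h_assoc : wedge (2 * (m + 1)) (2 * q) (wedge (2 * m) 2 (wpow F₀ m) F₀) (wpow F₁ q) =
      wedge (2 * m) (2 * (q + 1)) (wpow F₀ m) (wedge 2 (2 * q) F₀ (wpow F₁ q)) :=
    wedge_assoc (hF₀.wpow m) hF₀ _ (by ring) (by ring)
  rw [extd_wedge_wedge_of_closed (hF₀.wpow m) hη (hF₁.wpow q) (extd_wpow hF₀ hdF₀ m)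
      (extd_wpow hF₁ hdF₁ q) (by ring), (even_two_mul m).neg_one_pow, one_smul, hdη,
    show 1 + 2 * q + 1 = 2 * (q + 1) by ring, wedge_sub_left, wedge_sub_right, ← wpow_succ,
    wpow_succ' hF₀, h_assoc]

end LatticeForm

open LatticeForm

/-- **Lattice transgression formula** (case `k = 1` of the descent equations):
for lattice 1-forms `A₀, A₁` on `ℤ^D`, `F_i = dA_i`, `η^{1,0} = A₁ − A₀` and
`r ≥ 1`, `F₁^r − F₀^r = d(Σ_{m=0}^{r−1} F₀^m ∧ η^{1,0} ∧ F₁^{r−1−m})`. -/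
theorem lattice_transgression (D r : ℕ) (hr : 1 ≤ r) (A₀ A₁ : Coeff D)
    (h₀ : IsLatticeForm D 1 A₀) (h₁ : IsLatticeForm D 1 A₁) :
    wpow (curv A₁) r - wpow (curv A₀) r
      = extd (2 * r - 1)
          (∑ m ∈ Finset.range r,
            wedgeList [(2 * m, wpow (curv A₀) m), (1, A₁ - A₀),
                       (2 * (r - 1 - m), wpow (curv A₁) (r - 1 - m))]) := by
  obtain ⟨s, rfl⟩ : ∃ s, r = s + 1 := ⟨r - 1, by omega⟩
  have hF₀ : DependsOnFirst 2 (curv A₀) := h₀.dependsOnFirst.extd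
  have hF₁ : DependsOnFirst 2 (curv A₁) := h₁.dependsOnFirst.extd
  let mixedPower (m : ℕ) : Coeff D :=
    wedge (2 * m) (2 * (s + 1 - m)) (wpow (curv A₀) m) (wpow (curv A₁) (s + 1 - m))
  have h_first : mixedPower 0 = wpow (curv A₁) (s + 1) :=
    (one_wedge _ _).trans (alt_wpow _ _)
  have h_last : mixedPower (s + 1) = wpow (curv A₀) (s + 1) := by
    simp only [mixedPower, Nat.sub_self]
    exact (wedge_one _ _).trans (alt_wpow _ _)
  rw [← h_first, ← h_last, ← Finset.sum_range_sub', show 2 * (s + 1) - 1 = 2 * s + 1 by omega,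
    extd_sum]
  refine Finset.sum_congr rfl fun m hm => ?_
  obtain ⟨q, rfl⟩ := Nat.exists_eq_add_of_le (Nat.lt_succ_iff.mp (Finset.mem_range.mp hm))
  simp only [mixedPower, show m + q + 1 - m = q + 1 by omega, Nat.add_sub_add_right,
    Nat.add_sub_cancel, Nat.add_sub_cancel_left]
  rw [wedgeList_triple, alt_wpow]
  exact (extd_wpow_wedge_wedge_wpow hF₀ hF₁ (h₁.dependsOnFirst.sub h₀.dependsOnFirst)
    (extd_extd h₀.dependsOnFirst) (extd_extd h₁.dependsOnFirst) (extd_sub 1 A₁ A₀) m q).symm
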